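/- Let n ≥ 2, let S⁺ be the set of vectors in the standard (n−1)-simplex of ℝⁿ with all coordinates strictly positive, let u = (1/n, …, 1/n), and let α ∈ S⁺ with α ≠ u. Let D : S⁺ → ℝ be continuous and quasiconvex with D(u) = 0 and D(p) > 0 for p ≠ u, and define G : ℝ → ℝ by G(x) = 1 if x > 0 and G(x) = 0 if x ≤ 0; set C = G ∘ D, so C(u) = 0 and C(p) = 1 for p ≠ u. Let μ ∈ ℝ with Δ(α) = −Σ_j α_j log α_j < μ, and define f(p) = C(p)·(L_α(p) − μ) where L_α(p) = −Σ_j α_j log p_j. Then α is the unique global minimizer of f over S⁺, with f(α) = Δ(α) − μ < 0. -/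

import Mathlib

/-!
At the uniform vector the confidence vanishes, so the objective is `0` there, while everywhere else
on the positive simplex the confidence is `1` and the objective is the cross-entropy minus `μ`.
By the strict Gibbs inequality (`sum_mul_log_lt_of_ne`), the cross-entropy is minimized only at `α`,
and its value there is below `μ`; hence `α` beats both the uniform vector and every other point.
-/

open Finset

/-- The strictly positive part of the standard simplex. -/
def posSimplex (n : ℕ) : Set (Fin n → ℝ) :=
  {p | p ∈ stdSimplex ℝ (Fin n) ∧ ∀ i, 0 < p i}

/-- Strict Gibbs inequality: the cross-entropy exceeds the entropy away from `α`. It follows by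
summing `log x ≤ x - 1` at `x = p j / α j` with weights `α j`, strict wherever `p j ≠ α j`. -/
lemma sum_mul_log_lt_of_ne {n : ℕ} {α p : Fin n → ℝ} (hα : α ∈ posSimplex n)
    (hp : p ∈ posSimplex n) (hne : p ≠ α) :
    ∑ j, α j * Real.log (p j) < ∑ j, α j * Real.log (α j) := by
  obtain ⟨⟨-, hαs⟩, hα0⟩ := hα
  obtain ⟨⟨-, hps⟩, hp0⟩ := hp
  have hlog : ∀ j, Real.log (p j / α j) = Real.log (p j) - Real.log (α j) := fun j =>
    Real.log_div (hp0 j).ne' (hα0 j).ne'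
  have hmul : ∀ j, α j * (p j / α j - 1) = p j - α j := fun j => by
    have := (hα0 j).ne'
    field_simp
  have key : ∑ j, α j * Real.log (p j / α j) < ∑ j, (p j - α j) := by
    obtain ⟨i, hi⟩ := Function.ne_iff.mp hne
    refine Finset.sum_lt_sum (fun j _ => ?_) ⟨i, Finset.mem_univ i, ?_⟩
    · rw [← hmul]
      exact mul_le_mul_of_nonneg_left
        (Real.log_le_sub_one_of_pos (div_pos (hp0 j) (hα0 j))) (hα0 j).le
    · rw [← hmul]
      refine mul_lt_mul_of_pos_left
        (Real.log_lt_sub_one_of_pos (div_pos (hp0 i) (hα0 i)) fun h => hi ?_) (hα0 i)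
      rwa [div_eq_one_iff_eq (hα0 i).ne'] at h
  simp only [hlog, mul_sub, Finset.sum_sub_distrib, hαs, hps] at key
  linarith

/-- Third case of the paper's Theorem 2.4 (realizing the minimizer `α`): with the
binary confidence function `C(p) = 1_{D(p) > 0}`, so that `C(u) = 0` and `C(p) = 1`
for `p ≠ u`, the label distribution `α` is the unique global minimizer of the
confidence-weighted objective, with `f(α) = Δ(α) − μ < 0`. -/
theorem mowst_binary_confidence_minimizer (n : ℕ) (hn : 2 ≤ n)
    (u : Fin n → ℝ) (hu : u = fun _ => (1 : ℝ) / n)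
    (α : Fin n → ℝ) (hα : α ∈ posSimplex n) (hαu : α ≠ u)
    (D : (Fin n → ℝ) → ℝ)
    (hDcont : ContinuousOn D (posSimplex n))
    (hDqc : ∀ p ∈ posSimplex n, ∀ q ∈ posSimplex n, ∀ l ∈ Set.Icc (0 : ℝ) 1,
      D (l • p + (1 - l) • q) ≤ max (D p) (D q))
    (hDu : D u = 0)
    (hDpos : ∀ p ∈ posSimplex n, p ≠ u → 0 < D p)
    (μ : ℝ) (hμ : (-∑ j, α j * Real.log (α j)) < μ)
    (f : (Fin n → ℝ) → ℝ)
    (hf : ∀ p, f p =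
      (if 0 < D p then (1 : ℝ) else 0) * ((-∑ j, α j * Real.log (p j)) - μ)) :
    f α = (-∑ j, α j * Real.log (α j)) - μ ∧
    f α < 0 ∧
    (∀ p ∈ posSimplex n, p ≠ α → f α < f p) := by
  have hfα : f α = (-∑ j, α j * Real.log (α j)) - μ := by
    rw [hf, if_pos (hDpos α hα hαu), one_mul]
  have hneg : f α < 0 := by rw [hfα]; linarith
  refine ⟨hfα, hneg, fun p hp hpα => ?_⟩
  by_cases hpu : p = u
  · have h0 : f p = 0 := by rw [hf, hpu, hDu]; simp
    rwa [h0]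
  · have h1 := sum_mul_log_lt_of_ne hα hp hpα
    rw [hfα, hf, if_pos (hDpos p hp hpu), one_mul]
    linarith
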